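/- Let G be a finite abelian group and G₀ ⊆ G a non-half-factorial subset, i.e. Δ(G₀) ≠ ∅. Then min Δ(G₀) ≤ max { exp(G) − 2, r(G) − 1 }. -/

import Mathlib

open Multiset

section Defs

variable {G : Type*} [AddCommGroup G]

/-- `S` is a zero-sum sequence over `G₀`: a multiset with entries in `G₀` and sum `0`. -/
def IsZeroSumSeq (G₀ : Set G) (S : Multiset G) : Prop :=
  (∀ x ∈ S, x ∈ G₀) ∧ S.sum = 0

/-- `S` is an atom over `G₀`: a nonempty zero-sum sequence over `G₀` that is not the
union of two nonempty zero-sum sequences over `G₀`. -/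
def IsAtomSeq (G₀ : Set G) (S : Multiset G) : Prop :=
  IsZeroSumSeq G₀ S ∧ S ≠ 0 ∧
    ∀ A B : Multiset G, IsZeroSumSeq G₀ A → IsZeroSumSeq G₀ B →
      A ≠ 0 → B ≠ 0 → S ≠ A + B

/-- The set of lengths of `B`: all `k` such that `B` is a union of `k` atoms over `G₀`. -/
def LengthSet (G₀ : Set G) (B : Multiset G) : Set ℕ :=
  {k | ∃ l : Multiset (Multiset G), Multiset.card l = k ∧
      (∀ A ∈ l, IsAtomSeq G₀ A) ∧ l.sum = B}

/-- The set of successive distances of a set of naturals. -/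
def DeltaOf (L : Set ℕ) : Set ℕ :=
  {d | ∃ x ∈ L, ∃ y ∈ L, x < y ∧ y - x = d ∧ ∀ z ∈ L, ¬(x < z ∧ z < y)}

/-- The set of distances `Δ(G₀)`. -/
def DeltaSet (G₀ : Set G) : Set ℕ :=
  {d | ∃ B : Multiset G, IsZeroSumSeq G₀ B ∧ B ≠ 0 ∧ d ∈ DeltaOf (LengthSet G₀ B)}

/-- `G₀` is half-factorial if `Δ(G₀) = ∅`. -/
def IsHalfFactorialSet (G₀ : Set G) : Prop := DeltaSet G₀ = ∅

/-- `G₀` is minimal non-half-factorial if `Δ(G₀) ≠ ∅` and every proper subset is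
half-factorial. -/
def IsMinNonHalfFactorial (G₀ : Set G) : Prop :=
  (DeltaSet G₀).Nonempty ∧ ∀ G₁ : Set G, G₁ ⊂ G₀ → DeltaSet G₁ = ∅

/-- The cross number `k(S) = Σ 1/ord(g)` of a multiset over `G`. -/
noncomputable def crossNumber (S : Multiset G) : ℚ :=
  (S.map (fun g => ((addOrderOf g : ℚ))⁻¹)).sum

/-- `G₀` is an LCN-set if every atom over `G₀` has cross number at least 1. -/
def IsLCNSet (G₀ : Set G) : Prop :=
  ∀ U : Multiset G, IsAtomSeq G₀ U → 1 ≤ crossNumber U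

/-- A subset of `G \ {0}` is independent if any integral linear relation on its elements
has all summands zero. -/
def IsIndependentSet (E : Set G) : Prop :=
  (0 : G) ∉ E ∧ ∀ s : Finset G, ↑s ⊆ E → ∀ f : G → ℤ,
    (∑ e ∈ s, f e • e) = 0 → ∀ e ∈ s, f e • e = 0

/-- `d` is a greatest common divisor of the set `S` of naturals. -/
def IsSetGcd (S : Set ℕ) (d : ℕ) : Prop :=
  (∀ s ∈ S, d ∣ s) ∧ ∀ e : ℕ, (∀ s ∈ S, e ∣ s) → e ∣ d

end Defs

/-- The set of minimal distances `Δ*(G)`. -/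
def DeltaStar (G : Type*) [AddCommGroup G] : Set ℕ :=
  {d | ∃ G₀ : Set G, (DeltaSet G₀).Nonempty ∧ d = sInf (DeltaSet G₀)}

/-- The `p`-rank of a finite abelian group: `log_p` of the order of the `p`-torsion
subgroup `{x | p • x = 0}`. -/
noncomputable def pRank (G : Type*) [AddCommGroup G] (p : ℕ) : ℕ :=
  Nat.log p (Nat.card {x : G // p • x = 0})

/-- The rank of a finite abelian group: the maximum of the `p`-ranks over all primes. -/
noncomputable def rankG (G : Type*) [AddCommGroup G] : ℕ :=
  sSup {r : ℕ | ∃ p : ℕ, p.Prime ∧ r = pRank G p}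

/-!
Suppose `max (exp G - 2) (r G - 1) < d` with `d = min Δ(G₀)`. If atoms `U₁ ⋯ U_k = V₁ ⋯ V_l` with
`k < l`, then `l - k ≥ d`; comparing the factorizations of `U ^ exp G` shows that every atom has
cross number at least one. Hence, as soon as an atom divides a product of at most `d + 1` atoms of
cross number one, every factorization of that product involving it consists of atoms of cross
number one. This has two consequences.

* An atom `U` with at most `d + 1` distinct elements divides `∏ g ^ ord g`, the product being over
  its support, so it has cross number one.
* The products of atoms of cross number one form a monoid from which factors of the same kind can
  be cancelled, since an atom of cross number one has length at most `exp G ≤ d + 1` and thus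
  divides a product of `d + 1` of them.

Choose an atom `U` of cross number different from one with minimal support `I`. Then
`|I| ≥ d + 2 ≥ r G + 2`, and all zero-sum sequences over proper subsets of `I` are products of atoms
of cross number one. With that many elements, every integral relation on `I` is a sum of relations
each avoiding some element of `I`: it suffices to check this locally at each prime `p`, where any
`r G + 1` elements admit a relation with a coefficient prime to `p`, which can be used to eliminate
that coordinate. Consequently `U` is a quotient of products of atoms of cross number one, and
cancellation shows that it is itself such a product, so its cross number is one.
-/

section ZeroSum

variable {G : Type*} [AddCommGroup G] {G₀ : Set G}

lemma IsZeroSumSeq.add {A B : Multiset G} (hA : IsZeroSumSeq G₀ A) (hB : IsZeroSumSeq G₀ B) :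
    IsZeroSumSeq G₀ (A + B) :=
  ⟨fun x hx => (Multiset.mem_add.1 hx).elim (hA.1 x) (hB.1 x), by
    rw [Multiset.sum_add, hA.2, hB.2, add_zero]⟩

lemma IsZeroSumSeq.of_add_left {A B : Multiset G} (hA : IsZeroSumSeq G₀ A)
    (hAB : IsZeroSumSeq G₀ (A + B)) : IsZeroSumSeq G₀ B :=
  ⟨fun x hx => hAB.1 x (Multiset.mem_add.2 (Or.inr hx)), by
    simpa only [Multiset.sum_add, hA.2, zero_add] using hAB.2⟩

lemma IsZeroSumSeq.sum {l : Multiset (Multiset G)} (h : ∀ A ∈ l, IsZeroSumSeq G₀ A) :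
    IsZeroSumSeq G₀ l.sum :=
  Multiset.sum_induction _ l (fun _ _ => IsZeroSumSeq.add) ⟨by simp, by simp⟩ h

theorem IsZeroSumSeq.exists_factorization {B : Multiset G} (hB : IsZeroSumSeq G₀ B) :
    ∃ l : Multiset (Multiset G), (∀ A ∈ l, IsAtomSeq G₀ A) ∧ l.sum = B := by
  induction B using Multiset.strongInductionOn with
  | ih B ih =>
    rcases eq_or_ne B 0 with rfl | hB0
    · exact ⟨0, by simp, by simp⟩
    by_cases hatom : IsAtomSeq G₀ B
    · exact ⟨{B}, by simpa using hatom, by simp⟩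
    obtain ⟨A, C, hA, hC, hA0, hC0, rfl⟩ : ∃ A C : Multiset G, IsZeroSumSeq G₀ A ∧
        IsZeroSumSeq G₀ C ∧ A ≠ 0 ∧ C ≠ 0 ∧ B = A + C := by
      by_contra! hsplit
      exact hatom ⟨hB, hB0, hsplit⟩
    obtain ⟨lA, hlA, rfl⟩ := ih A (lt_add_of_pos_right A (pos_iff_ne_zero.2 hC0)) hA
    obtain ⟨lC, hlC, rfl⟩ := ih C (lt_add_of_pos_left C (pos_iff_ne_zero.2 hA0)) hC
    exact ⟨lA + lC, fun D hD => (Multiset.mem_add.1 hD).elim (hlA D) (hlC D),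
      Multiset.sum_add _ _⟩

lemma IsAtomSeq.eq_of_le {A U : Multiset G} (hU : IsAtomSeq G₀ U) (hA : IsZeroSumSeq G₀ A)
    (hA0 : A ≠ 0) (hAU : A ≤ U) : A = U := by
  obtain ⟨C, rfl⟩ := Multiset.le_iff_exists_add.1 hAU
  by_contra hne
  exact hU.2.2 A C hA (hA.of_add_left hU.1) hA0 (by simpa using hne) rfl

lemma IsAtomSeq.mem_of_sum_eq {U : Multiset G} (hU : IsAtomSeq G₀ U) {l : Multiset (Multiset G)}
    (hl : ∀ A ∈ l, IsAtomSeq G₀ A) (hs : l.sum = U) : U ∈ l := by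
  obtain ⟨A, hA⟩ : ∃ A, A ∈ l := Multiset.exists_mem_of_ne_zero fun hl0 =>
    hU.2.1 (by simpa [hl0] using hs.symm)
  rwa [← hU.eq_of_le (hl A hA).1 (hl A hA).2.1 (hs ▸ Multiset.le_sum_of_mem hA)]

lemma IsAtomSeq.mono {T : Set G} (hT : T ⊆ G₀) {U : Multiset G} (hU : IsAtomSeq T U) :
    IsAtomSeq G₀ U :=
  ⟨⟨fun x hx => hT (hU.1.1 x hx), hU.1.2⟩, hU.2.1, fun A B hA hB hA0 hB0 hAB =>
    hU.2.2 A B ⟨fun x hx => hU.1.1 x (by simp [hAB, hx]), hA.2⟩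
      ⟨fun x hx => hU.1.1 x (by simp [hAB, hx]), hB.2⟩ hA0 hB0 hAB⟩

lemma isAtomSeq_replicate_addOrderOf {g : G} (hg : g ∈ G₀) (hfin : IsOfFinAddOrder g) :
    IsAtomSeq G₀ (replicate (addOrderOf g) g) := by
  refine ⟨⟨fun x hx => Multiset.eq_of_mem_replicate hx ▸ hg, ?_⟩, ?_, ?_⟩
  · rw [Multiset.sum_replicate, addOrderOf_nsmul_eq_zero]
  · simpa [← Multiset.card_eq_zero] using hfin.addOrderOf_pos.ne'
  · intro A B hA _ hA0 hB0 h
    have hArep : A = replicate (card A) g := Multiset.eq_replicate_card.2 fun x hx =>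
      Multiset.eq_of_mem_replicate (h ▸ Multiset.mem_add.2 (Or.inl hx))
    have hord : addOrderOf g ∣ card A := addOrderOf_dvd_of_nsmul_eq_zero <| by
      rw [← Multiset.sum_replicate, ← hArep, hA.2]
    have hcard := congrArg card h
    rw [Multiset.card_replicate, Multiset.card_add] at hcard
    have := Nat.le_of_dvd (Multiset.card_pos.2 hA0) hord
    have := Multiset.card_pos.2 hB0
    lia

lemma IsAtomSeq.count_le_addOrderOf [DecidableEq G] {U : Multiset G} (hU : IsAtomSeq G₀ U) {g : G}
    (hfin : IsOfFinAddOrder g) : U.count g ≤ addOrderOf g := by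
  by_contra! hlt
  have hg : g ∈ U := Multiset.count_pos.1 (pos_of_gt hlt)
  have hatom := isAtomSeq_replicate_addOrderOf (hU.1.1 g hg) hfin
  have hrep := hU.eq_of_le hatom.1 hatom.2.1 (Multiset.le_count_iff_replicate_le.1 hlt.le)
  rw [← hrep, Multiset.count_replicate_self] at hlt
  exact hlt.false

end ZeroSum

section Distances

variable {G : Type*} [AddCommGroup G] {G₀ : Set G}

lemma exists_mem_deltaOf_le_sub {L : Set ℕ} {a b : ℕ} (ha : a ∈ L) (hb : b ∈ L) (hab : a < b) :
    ∃ d ∈ DeltaOf L, d ≤ b - a := by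
  classical
  have hex : ∃ y, y ∈ L ∧ a < y := ⟨b, hb, hab⟩
  obtain ⟨hcL, hac⟩ := Nat.find_spec hex
  refine ⟨Nat.find hex - a, ⟨a, ha, _, hcL, hac, rfl, ?_⟩,
    Nat.sub_le_sub_right (Nat.find_min' hex ⟨hb, hab⟩) a⟩
  exact fun z hz hbetween => Nat.find_min hex hbetween.2 ⟨hz, hbetween.1⟩

lemma sInf_deltaSet_le_sub {l₁ l₂ : Multiset (Multiset G)} (h₁ : ∀ A ∈ l₁, IsAtomSeq G₀ A)
    (h₂ : ∀ A ∈ l₂, IsAtomSeq G₀ A) (hs : l₁.sum = l₂.sum) (hlt : card l₁ < card l₂) :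
    sInf (DeltaSet G₀) ≤ card l₂ - card l₁ := by
  have hmem₁ : card l₁ ∈ LengthSet G₀ l₂.sum := ⟨l₁, rfl, h₁, hs⟩
  have hmem₂ : card l₂ ∈ LengthSet G₀ l₂.sum := ⟨l₂, rfl, h₂, rfl⟩
  obtain ⟨d, hd, hle⟩ := exists_mem_deltaOf_le_sub hmem₁ hmem₂ hlt
  have hne : l₂.sum ≠ 0 := by
    obtain ⟨A, hA⟩ := Multiset.card_pos_iff_exists_mem.1 (pos_of_gt hlt)
    exact fun h0 => (h₂ A hA).2.1 (Multiset.sum_eq_zero_iff.1 h0 A hA)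
  have hmem : d ∈ DeltaSet G₀ := ⟨_, IsZeroSumSeq.sum fun A hA => (h₂ A hA).1, hne, hd⟩
  exact (Nat.sInf_le hmem).trans hle

end Distances

section CrossNumber

variable {G : Type*} [AddCommGroup G] {G₀ : Set G}

lemma crossNumber_add (A B : Multiset G) :
    crossNumber (A + B) = crossNumber A + crossNumber B := by
  simp [crossNumber]

lemma crossNumber_nsmul (n : ℕ) (A : Multiset G) :
    crossNumber (n • A) = n * crossNumber A := by
  simp [crossNumber, Multiset.map_nsmul, Multiset.sum_nsmul]

lemma crossNumber_sum (l : Multiset (Multiset G)) :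
    crossNumber l.sum = (l.map crossNumber).sum :=
  map_multiset_sum (AddMonoidHom.mk' crossNumber crossNumber_add) l

lemma crossNumber_sum_eq_card {l : Multiset (Multiset G)} (h : ∀ A ∈ l, crossNumber A = 1) :
    crossNumber l.sum = card l := by
  rw [crossNumber_sum, Multiset.map_congr rfl h]
  simp

lemma card_le_crossNumber_sum {l : Multiset (Multiset G)} (h : ∀ A ∈ l, 1 ≤ crossNumber A) :
    (card l : ℚ) ≤ crossNumber l.sum := by
  rw [crossNumber_sum]
  simpa using Multiset.card_nsmul_le_sum (s := l.map crossNumber) (a := 1) (by simpa using h)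

lemma crossNumber_eq_one_of_crossNumber_sum_le_card {l : Multiset (Multiset G)}
    (h : ∀ A ∈ l, 1 ≤ crossNumber A) (hle : crossNumber l.sum ≤ card l) :
    ∀ A ∈ l, crossNumber A = 1 := by
  intro A hA
  obtain ⟨t, rfl⟩ := Multiset.exists_cons_of_mem hA
  have ht := card_le_crossNumber_sum fun B hB => h B (Multiset.mem_cons_of_mem hB)
  rw [Multiset.sum_cons, crossNumber_add, Multiset.card_cons, Nat.cast_succ] at hle
  linarith [h A hA]

lemma crossNumber_replicate_addOrderOf {g : G} (hfin : IsOfFinAddOrder g) :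
    crossNumber (replicate (addOrderOf g) g) = 1 := by
  have : (addOrderOf g : ℚ) ≠ 0 := Nat.cast_ne_zero.2 hfin.addOrderOf_pos.ne'
  simp [crossNumber, this]

lemma card_le_exponent_mul_crossNumber [Finite G] (W : Multiset G) :
    (card W : ℚ) ≤ AddMonoid.exponent G * crossNumber W := by
  have hexp : (0 : ℚ) < AddMonoid.exponent G :=
    Nat.cast_pos.2 (Nat.pos_of_ne_zero AddMonoid.exponent_ne_zero_of_finite)
  have hinv : ∀ q ∈ W.map fun g => (addOrderOf g : ℚ)⁻¹, (AddMonoid.exponent G : ℚ)⁻¹ ≤ q := by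
    simp only [Multiset.mem_map, forall_exists_index, and_imp, forall_apply_eq_imp_iff₂]
    exact fun g _ => inv_anti₀ (Nat.cast_pos.2 (addOrderOf_pos g))
      (Nat.cast_le.2 (AddMonoid.addOrderOf_le_exponent AddMonoid.ExponentExists.of_finite g))
  have hsum := Multiset.card_nsmul_le_sum hinv
  rw [Multiset.card_map, nsmul_eq_mul, ← div_eq_mul_inv, div_le_iff₀' hexp] at hsum
  exact hsum

theorem deltaSet_eq_empty_of_forall_crossNumber_eq_one
    (h : ∀ A : Multiset G, IsAtomSeq G₀ A → crossNumber A = 1) : DeltaSet G₀ = ∅ := by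
  rw [Set.eq_empty_iff_forall_notMem]
  rintro _ ⟨B, -, -, -, ⟨l₁, rfl, hl₁, hs₁⟩, -, ⟨l₂, rfl, hl₂, hs₂⟩, hlt, -⟩
  have h₁ := crossNumber_sum_eq_card fun A hA => h A (hl₁ A hA)
  have h₂ := crossNumber_sum_eq_card fun A hA => h A (hl₂ A hA)
  rw [hs₁] at h₁
  rw [hs₂, h₁] at h₂
  exact hlt.ne (Nat.cast_injective h₂)

end CrossNumber

section CrossOne

variable {G : Type*} [AddCommGroup G] {G₀ : Set G}

/-- The submonoid of `B(G₀)` of all unions of atoms over `G₀` of cross number one. -/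
def crossOneMonoid (G₀ : Set G) : AddSubmonoid (Multiset G) :=
  AddSubmonoid.closure {A | IsAtomSeq G₀ A ∧ crossNumber A = 1}

lemma mem_crossOneMonoid_iff {B : Multiset G} :
    B ∈ crossOneMonoid G₀ ↔
      ∃ l : Multiset (Multiset G), (∀ A ∈ l, IsAtomSeq G₀ A ∧ crossNumber A = 1) ∧ l.sum = B := by
  refine ⟨AddSubmonoid.exists_multiset_of_mem_closure, ?_⟩
  rintro ⟨l, hl, rfl⟩
  exact AddSubmonoid.multiset_sum_mem _ l fun A hA => AddSubmonoid.subset_closure (hl A hA)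

lemma IsAtomSeq.crossNumber_eq_one_of_mem {U : Multiset G} (hU : IsAtomSeq G₀ U)
    (hmem : U ∈ crossOneMonoid G₀) : crossNumber U = 1 := by
  obtain ⟨l, hl, hs⟩ := mem_crossOneMonoid_iff.1 hmem
  exact (hl U (hU.mem_of_sum_eq (fun A hA => (hl A hA).1) hs)).2

lemma replicate_addOrderOf_mem_crossOneMonoid {g : G} (hg : g ∈ G₀) (hfin : IsOfFinAddOrder g) :
    replicate (addOrderOf g) g ∈ crossOneMonoid G₀ :=
  AddSubmonoid.subset_closure (s := {A | IsAtomSeq G₀ A ∧ crossNumber A = 1})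
    ⟨isAtomSeq_replicate_addOrderOf hg hfin, crossNumber_replicate_addOrderOf hfin⟩

lemma nsmul_mem_crossOneMonoid {n : ℕ} (hn : n ≠ 0) {U : Multiset G} (hU : ∀ g ∈ U, g ∈ G₀)
    (hord : ∀ g ∈ U, addOrderOf g ∣ n) : n • U ∈ crossOneMonoid G₀ := by
  rw [← Multiset.sum_map_singleton U, ← Multiset.sum_map_nsmul]
  refine AddSubmonoid.multiset_sum_mem _ _ fun A hA => ?_
  obtain ⟨g, hg, rfl⟩ := Multiset.mem_map.1 hA
  obtain ⟨k, rfl⟩ := hord g hg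
  have hfin : IsOfFinAddOrder g :=
    addOrderOf_pos_iff.1 (Nat.pos_of_ne_zero (left_ne_zero_of_mul hn))
  rw [mul_nsmul, Multiset.nsmul_singleton]
  exact nsmul_mem (replicate_addOrderOf_mem_crossOneMonoid (hU g hg) hfin) k

theorem isLCNSet_of_exponent_le [Finite G] (hexp : AddMonoid.exponent G ≤ sInf (DeltaSet G₀) + 1) :
    IsLCNSet G₀ := by
  intro U hU
  by_contra! hlt
  set n := AddMonoid.exponent G
  have hn : n ≠ 0 := AddMonoid.exponent_ne_zero_of_finite
  obtain ⟨l, hl, hs⟩ := mem_crossOneMonoid_iff.1 (nsmul_mem_crossOneMonoid hn hU.1.1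
    fun g _ => AddMonoid.addOrder_dvd_exponent g)
  have hcard : (card l : ℚ) = n * crossNumber U := by
    rw [← crossNumber_sum_eq_card fun A hA => (hl A hA).2, hs, crossNumber_nsmul]
  have hUl : card U ≤ card l := by
    exact_mod_cast hcard ▸ card_le_exponent_mul_crossNumber U
  have hln : card l < n := by
    have : (n : ℚ) * crossNumber U < n :=
      mul_lt_of_lt_one_right (Nat.cast_pos.2 (Nat.pos_of_ne_zero hn)) hlt
    exact_mod_cast hcard ▸ this
  have hU2 : 2 ≤ card U := by
    by_contra! hU1
    obtain ⟨g, rfl⟩ := Multiset.card_eq_one.1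
      (le_antisymm (Nat.lt_succ_iff.1 hU1) (Multiset.card_pos.2 hU.2.1))
    obtain rfl : g = 0 := by simpa using hU.1.2
    simp [crossNumber] at hlt
  have hdist := sInf_deltaSet_le_sub (fun A hA => (hl A hA).1)
    (fun A hA => Multiset.eq_of_mem_replicate hA ▸ hU) (l₂ := replicate n U)
    (by rw [hs, Multiset.sum_replicate]) (by rwa [Multiset.card_replicate])
  rw [Multiset.card_replicate] at hdist
  lia

lemma forall_crossNumber_eq_one_of_sum_eq (hLCN : IsLCNSet G₀) {l l' : Multiset (Multiset G)}
    (hl : ∀ A ∈ l, IsAtomSeq G₀ A ∧ crossNumber A = 1) (hl' : ∀ A ∈ l', IsAtomSeq G₀ A)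
    (hs : l'.sum = l.sum) (hlt : card l < card l' + sInf (DeltaSet G₀)) :
    ∀ A ∈ l', crossNumber A = 1 := by
  have hcross : crossNumber l'.sum = card l :=
    hs ▸ crossNumber_sum_eq_card fun A hA => (hl A hA).2
  have hle : card l' ≤ card l := by
    exact_mod_cast hcross ▸ card_le_crossNumber_sum fun A hA => hLCN A (hl' A hA)
  have heq : card l' = card l := by
    by_contra hne
    have := sInf_deltaSet_le_sub hl' (fun A hA => (hl A hA).1) hs (lt_of_le_of_ne hle hne)
    lia
  exact crossNumber_eq_one_of_crossNumber_sum_le_card (fun A hA => hLCN A (hl' A hA))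
    (by rw [hcross, heq])

lemma IsAtomSeq.crossNumber_eq_one_and_mem_of_add_eq_sum (hLCN : IsLCNSet G₀) {W R : Multiset G}
    (hW : IsAtomSeq G₀ W) {l : Multiset (Multiset G)}
    (hl : ∀ A ∈ l, IsAtomSeq G₀ A ∧ crossNumber A = 1)
    (hcard : card l ≤ sInf (DeltaSet G₀) + 1) (hs : W + R = l.sum) :
    crossNumber W = 1 ∧ R ∈ crossOneMonoid G₀ := by
  rcases eq_or_ne R 0 with rfl | hR0
  · exact ⟨hW.crossNumber_eq_one_of_mem (mem_crossOneMonoid_iff.2 ⟨l, hl, by simp [← hs]⟩),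
      zero_mem _⟩
  have hR : IsZeroSumSeq G₀ R :=
    hW.1.of_add_left (hs ▸ IsZeroSumSeq.sum fun A hA => (hl A hA).1.1)
  obtain ⟨lR, hlR, rfl⟩ := hR.exists_factorization
  have hlR_pos : 0 < card lR := Multiset.card_pos.2 fun h => hR0 (by simp [h])
  have hone := forall_crossNumber_eq_one_of_sum_eq hLCN hl (l' := W ::ₘ lR)
    (Multiset.forall_mem_cons.2 ⟨hW, hlR⟩) (by rw [Multiset.sum_cons, hs])
    (by rw [Multiset.card_cons]; lia)
  exact ⟨hone W (Multiset.mem_cons_self W lR), mem_crossOneMonoid_iff.2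
    ⟨lR, fun A hA => ⟨hlR A hA, hone A (Multiset.mem_cons_of_mem hA)⟩, rfl⟩⟩

theorem IsAtomSeq.crossNumber_eq_one_of_card_toFinset_le [Finite G] [DecidableEq G]
    (hLCN : IsLCNSet G₀) {U : Multiset G} (hU : IsAtomSeq G₀ U)
    (hcard : U.toFinset.card ≤ sInf (DeltaSet G₀) + 1) : crossNumber U = 1 := by
  set l := U.toFinset.val.map fun g => replicate (addOrderOf g) g with hl_def
  have hl : ∀ A ∈ l, IsAtomSeq G₀ A ∧ crossNumber A = 1 := by
    intro A hA
    obtain ⟨g, hg, rfl⟩ := Multiset.mem_map.1 hA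
    exact ⟨isAtomSeq_replicate_addOrderOf (hU.1.1 g (Multiset.mem_toFinset.1 hg))
      (isOfFinAddOrder_of_finite g), crossNumber_replicate_addOrderOf (isOfFinAddOrder_of_finite g)⟩
  have hle : U ≤ l.sum := calc
    U = ∑ g ∈ U.toFinset, U.count g • {g} := (Multiset.toFinset_sum_count_nsmul_eq U).symm
    _ ≤ ∑ g ∈ U.toFinset, replicate (addOrderOf g) g := Finset.sum_le_sum fun g _ => by
      rw [Multiset.nsmul_singleton]
      exact Multiset.replicate_mono _ (hU.count_le_addOrderOf (isOfFinAddOrder_of_finite g))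
  obtain ⟨R, hR⟩ := Multiset.le_iff_exists_add.1 hle
  exact (hU.crossNumber_eq_one_and_mem_of_add_eq_sum hLCN hl
    (by rwa [hl_def, Multiset.card_map, Finset.card_val]) hR.symm).1

lemma exists_le_card_le_card_of_le_sum {α : Type*} {l : Multiset (Multiset α)} {W : Multiset α}
    (hW : W ≤ l.sum) : ∃ l' ≤ l, card l' ≤ card W ∧ W ≤ l'.sum := by
  classical
  induction l using Multiset.induction_on generalizing W with
  | empty => exact ⟨0, le_rfl, Nat.zero_le _, hW⟩
  | cons A l ih =>
    rw [Multiset.sum_cons, ← tsub_le_iff_left] at hW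
    obtain ⟨l', hl', hcard, hle⟩ := ih hW
    rcases (tsub_le_self : W - A ≤ W).eq_or_lt with heq | hlt
    · rw [heq] at hcard hle
      exact ⟨l', hl'.trans (Multiset.le_cons_self _ _), hcard, hle⟩
    · refine ⟨A ::ₘ l', Multiset.cons_le_cons _ hl', ?_, ?_⟩
      · rw [Multiset.card_cons]
        exact hcard.trans_lt (Multiset.card_lt_card hlt)
      · rwa [Multiset.sum_cons, ← tsub_le_iff_left]

variable [Finite G]

lemma mem_crossOneMonoid_of_add_atom_mem (hexp : AddMonoid.exponent G ≤ sInf (DeltaSet G₀) + 1)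
    {B W : Multiset G} (hW : IsAtomSeq G₀ W) (hW1 : crossNumber W = 1)
    (hBW : B + W ∈ crossOneMonoid G₀) : B ∈ crossOneMonoid G₀ := by
  obtain ⟨l, hl, hs⟩ := mem_crossOneMonoid_iff.1 hBW
  obtain ⟨l', hl'l, hcard, hle⟩ :=
    exists_le_card_le_card_of_le_sum (hs ▸ Multiset.le_add_left W B : W ≤ l.sum)
  obtain ⟨l'', rfl⟩ := Multiset.le_iff_exists_add.1 hl'l
  obtain ⟨R, hR⟩ := Multiset.le_iff_exists_add.1 hle
  have hWexp : card W ≤ AddMonoid.exponent G := by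
    have := card_le_exponent_mul_crossNumber W
    rw [hW1, mul_one] at this
    exact_mod_cast this
  have hRmem : R ∈ crossOneMonoid G₀ :=
    (hW.crossNumber_eq_one_and_mem_of_add_eq_sum (isLCNSet_of_exponent_le hexp)
      (fun A hA => hl A (by simp [hA])) (hcard.trans (hWexp.trans hexp)) hR.symm).2
  have hB : B = R + l''.sum := by
    rw [Multiset.sum_add, hR, add_comm B, add_assoc] at hs
    exact (add_left_cancel hs).symm
  rw [hB]
  exact add_mem hRmem (mem_crossOneMonoid_iff.2 ⟨l'', fun A hA => hl A (by simp [hA]), rfl⟩)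

theorem mem_crossOneMonoid_of_add_mem (hexp : AddMonoid.exponent G ≤ sInf (DeltaSet G₀) + 1)
    {B C : Multiset G} (hC : C ∈ crossOneMonoid G₀) (hBC : B + C ∈ crossOneMonoid G₀) :
    B ∈ crossOneMonoid G₀ := by
  induction hC using AddSubmonoid.closure_induction generalizing B with
  | mem W hW => exact mem_crossOneMonoid_of_add_atom_mem hexp hW.1 hW.2 hBC
  | zero => simpa using hBC
  | add C D _ _ ihC ihD => exact ihC (ihD (by rwa [add_assoc]))

end CrossOne

section MinimalAtom

variable {G : Type*} [AddCommGroup G] {G₀ : Set G}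

lemma IsZeroSumSeq.mem_crossOneMonoid_of_subset {T : Set G} (hT : T ⊆ G₀)
    (h1 : ∀ A, IsAtomSeq T A → crossNumber A = 1) {B : Multiset G} (hB : IsZeroSumSeq T B) :
    B ∈ crossOneMonoid G₀ := by
  obtain ⟨l, hl, rfl⟩ := hB.exists_factorization
  exact mem_crossOneMonoid_iff.2 ⟨l, fun A hA => ⟨(hl A hA).mono hT, h1 A (hl A hA)⟩, rfl⟩

theorem exists_isAtomSeq_crossNumber_ne_one_forall_ssubset [DecidableEq G]
    (h : (DeltaSet G₀).Nonempty) :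
    ∃ U, IsAtomSeq G₀ U ∧ crossNumber U ≠ 1 ∧ ∀ T ⊂ (U.toFinset : Set G), ∀ B,
      IsZeroSumSeq T B → B ∈ crossOneMonoid G₀ := by
  obtain ⟨A, hA⟩ : ∃ A, IsAtomSeq G₀ A ∧ crossNumber A ≠ 1 := by
    by_contra! hall
    exact h.ne_empty (deltaSet_eq_empty_of_forall_crossNumber_eq_one hall)
  obtain ⟨U, ⟨hU, hU1⟩, hmin⟩ := exists_minimalFor_of_wellFoundedLT
    (fun A => IsAtomSeq G₀ A ∧ crossNumber A ≠ 1) Multiset.toFinset ⟨A, hA⟩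
  refine ⟨U, hU, hU1, fun T hT B hB => ?_⟩
  have hTG : T ⊆ G₀ := fun g hg => hU.1.1 g (Multiset.mem_toFinset.1 (hT.subset hg))
  refine hB.mem_crossOneMonoid_of_subset hTG fun A hA => by_contra fun hA1 => ?_
  have hAT : (A.toFinset : Set G) ⊆ T := fun g hg => hA.1.1 g (Multiset.mem_toFinset.1 hg)
  have hAU : A.toFinset ⊂ U.toFinset := Finset.coe_ssubset.1 (hAT.trans_ssubset hT)
  exact hAU.not_ge (hmin ⟨hA.mono hTG, hA1⟩ hAU.le)

end MinimalAtom

section Relations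

variable {G : Type*} [AddCommGroup G]

/-- The group of integral relations `∑ g, x g • g = 0` whose coefficient vector `x` is supported
on `T`. -/
noncomputable def relations (T : Set G) : Submodule ℤ (G →₀ ℤ) :=
  Finsupp.supported ℤ ℤ T ⊓ LinearMap.ker (Finsupp.linearCombination ℤ id)

lemma mem_of_forall_prime_exists_zsmul_mem {M : Type*} [AddCommGroup M] {N : Submodule ℤ M} {x : M}
    (h : ∀ p : ℕ, p.Prime → ∃ m : ℤ, ¬(p : ℤ) ∣ m ∧ m • x ∈ N) : x ∈ N := by
  obtain ⟨c, hc⟩ := (IsPrincipalIdealRing.principal (N.colon {x})).principal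
  have mem_iff (m : ℤ) : m • x ∈ N ↔ c ∣ m := by
    rw [← Submodule.mem_colon_singleton, hc, Submodule.mem_span_singleton,
      dvd_iff_exists_eq_mul_left]
    simp only [smul_eq_mul, eq_comm]
  have hunit : c.natAbs = 1 := by
    by_contra hne
    obtain ⟨p, hp, hpc⟩ := Nat.exists_prime_and_dvd hne
    obtain ⟨m, hpm, hm⟩ := h p hp
    exact hpm ((Int.natCast_dvd.2 hpc).trans ((mem_iff m).1 hm))
  simpa using (mem_iff 1).2 (Int.isUnit_iff_natAbs_eq.2 hunit).dvd

lemma index_range_nsmul_of_ker_le {F A : Type*} [AddCommGroup F] [AddCommGroup A] {f : F →+ A}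
    (hf : Function.Surjective f) {n : ℕ} (hker : f.ker ≤ (nsmulAddMonoidHom (α := F) n).range) :
    (nsmulAddMonoidHom (α := A) n).range.index = (nsmulAddMonoidHom (α := F) n).range.index := by
  have hmap :
      (nsmulAddMonoidHom (α := F) n).range.map f = (nsmulAddMonoidHom (α := A) n).range := by
    ext a
    simp [hf.exists]
  rw [← hmap, AddSubgroup.index_map_eq _ hf hker]

lemma card_torsion_addSubgroup_le [Finite G] (A : AddSubgroup G) (n : ℕ) :
    Nat.card (nsmulAddMonoidHom (α := A) n).ker ≤ Nat.card {x : G // n • x = 0} :=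
  Nat.card_le_card_of_injective
    (fun a => ⟨(a : A), congrArg Subtype.val (AddMonoidHom.mem_ker.1 a.2)⟩)
    fun _ _ hab => Subtype.ext (Subtype.ext (Subtype.mk.inj hab))

variable [Finite G]

lemma card_le_pRank_of_forall_relation_dvd {p : ℕ} (hp : p.Prime) {ι : Type*} [Fintype ι]
    (v : ι → G)
    (hv : ∀ z : ι →₀ ℤ, Finsupp.linearCombination ℤ v z = 0 → ∀ i, (p : ℤ) ∣ z i) :
    Fintype.card ι ≤ pRank G p := by
  set φ : (ι →₀ ℤ) →+ G := (Finsupp.linearCombination ℤ v).toAddMonoidHom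
  have hker : φ.rangeRestrict.ker ≤ (nsmulAddMonoidHom (α := ι →₀ ℤ) p).range := by
    intro z hz
    rw [AddMonoidHom.ker_rangeRestrict] at hz
    choose w hw using hv z hz
    exact ⟨Finsupp.equivFunOnFinite.symm w, by ext i; simp [hw]⟩
  have hcard : p ^ Fintype.card ι ≤ Nat.card {x : G // p • x = 0} := calc
    p ^ Fintype.card ι = (nsmulAddMonoidHom (α := ι →₀ ℤ) p).range.index := by
      rw [AddSubgroup.index_range_nsmul, Module.finrank_finsupp_self]
    _ = (nsmulAddMonoidHom (α := φ.range) p).range.index :=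
      (index_range_nsmul_of_ker_le φ.rangeRestrict_surjective hker).symm
    _ = Nat.card (nsmulAddMonoidHom (α := φ.range) p).ker := AddSubgroup.index_range
    _ ≤ Nat.card {x : G // p • x = 0} := card_torsion_addSubgroup_le _ _
  have : Nonempty {x : G // p • x = 0} := ⟨⟨0, smul_zero p⟩⟩
  exact (Nat.le_log_iff_pow_le hp.one_lt Nat.card_pos.ne').2 hcard

lemma exists_mem_relations_not_dvd {p : ℕ} (hp : p.Prime) {J : Finset G}
    (hJ : pRank G p < J.card) :
    ∃ z ∈ relations (J : Set G), ∃ i ∈ J, ¬(p : ℤ) ∣ z i := by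
  by_contra! hdvd
  refine hJ.not_ge (Fintype.card_coe J ▸ card_le_pRank_of_forall_relation_dvd hp
    (Subtype.val : J → G) fun z hz i => ?_)
  have := hdvd (z.mapDomain Subtype.val) ⟨?_, ?_⟩ i i.2
  · rwa [Finsupp.mapDomain_apply Subtype.val_injective] at this
  · classical
    refine (Finsupp.mem_supported _ _).2 ((Finset.coe_subset.2 Finsupp.mapDomain_support).trans ?_)
    rw [Finset.coe_image, Set.image_subset_iff]
    exact fun i _ => i.2
  · simpa [Finsupp.linearCombination_mapDomain] using hz

lemma exists_not_dvd_zsmul_mem_iSup_relations {p : ℕ} (hp : p.Prime) {I : Finset G}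
    (hI : pRank G p + 2 ≤ I.card) {x : G →₀ ℤ} (hx : x ∈ relations (I : Set G)) :
    ∃ m : ℤ, ¬(p : ℤ) ∣ m ∧ m • x ∈ ⨆ i : I, relations ((I : Set G) \ {i.1}) := by
  classical
  obtain ⟨j, hj⟩ : I.Nonempty := Finset.card_pos.1 (by lia)
  obtain ⟨z, hz, i, hi, hpi⟩ := exists_mem_relations_not_dvd hp (J := I.erase j)
    (by rw [Finset.card_erase_of_mem hj]; lia)
  rw [Finset.coe_erase] at hz
  have hiI := Finset.mem_of_mem_erase hi
  have hzI : z ∈ relations (I : Set G) :=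
    ⟨Finsupp.supported_mono Set.sdiff_subset hz.1, hz.2⟩
  have hcomb : z i • x - x i • z ∈ relations (I : Set G) :=
    sub_mem (Submodule.smul_mem _ _ hx) (Submodule.smul_mem _ _ hzI)
  have hcomb_i : z i • x - x i • z ∈ relations ((I : Set G) \ {i}) := by
    refine ⟨(Finsupp.mem_supported' _ _).2 fun g hg => ?_, hcomb.2⟩
    by_cases hgi : g = i
    · simp [hgi, mul_comm]
    · exact (Finsupp.mem_supported' _ _).1 hcomb.1 g fun hgI => hg ⟨hgI, hgi⟩
  refine ⟨z i, hpi, ?_⟩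
  rw [← sub_add_cancel (z i • x) (x i • z)]
  exact add_mem (Submodule.mem_iSup_of_mem ⟨i, hiI⟩ hcomb_i)
    (Submodule.mem_iSup_of_mem ⟨j, hj⟩ (Submodule.smul_mem _ _ hz))

lemma pRank_le_rankG {p : ℕ} (hp : p.Prime) : pRank G p ≤ rankG G := by
  refine le_csSup ⟨Nat.card G, ?_⟩ ⟨p, hp, rfl⟩
  rintro r ⟨q, -, rfl⟩
  exact (Nat.log_le_self _ _).trans (Nat.card_le_card_of_injective _ Subtype.val_injective)

theorem relations_le_iSup_relations_diff_singleton {I : Finset G} (hI : rankG G + 2 ≤ I.card) :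
    relations (I : Set G) ≤ ⨆ i : I, relations ((I : Set G) \ {i.1}) := fun _ hx =>
  mem_of_forall_prime_exists_zsmul_mem fun _ hp => exists_not_dvd_zsmul_mem_iSup_relations hp
    ((Nat.add_le_add_right (pRank_le_rankG hp) 2).trans hI) hx

end Relations

section ExponentVector

variable {α : Type*}

/-- The embedding of multisets into integer vectors, sending a multiset to its multiplicities. -/
noncomputable def exponentVector : Multiset α →+ (α →₀ ℤ) :=
  Multiset.sumAddMonoidHom.comp (Multiset.mapAddMonoidHom fun g => Finsupp.single g 1)

lemma exponentVector_cons (a : α) (S : Multiset α) :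
    exponentVector (a ::ₘ S) = Finsupp.single a 1 + exponentVector S := by
  simp [exponentVector]

lemma exponentVector_apply [DecidableEq α] (S : Multiset α) (a : α) :
    exponentVector S a = S.count a := by
  induction S using Multiset.induction_on with
  | empty => simp
  | cons b S ih =>
    rw [exponentVector_cons, Finsupp.add_apply, ih, Multiset.count_cons, Finsupp.single_apply]
    simp [eq_comm, add_comm]

lemma exponentVector_injective : Function.Injective (exponentVector (α := α)) := by
  classical
  intro A B h
  ext a
  have := DFunLike.congr_fun h a
  rwa [exponentVector_apply, exponentVector_apply, Nat.cast_inj] at this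

lemma exists_exponentVector_sub_eq {T : Set α} {x : α →₀ ℤ} (hx : x ∈ Finsupp.supported ℤ ℤ T) :
    ∃ A B : Multiset α, (∀ a ∈ A, a ∈ T) ∧ (∀ a ∈ B, a ∈ T) ∧
      exponentVector A - exponentVector B = x := by
  classical
  have mem_of_mem (y : α →₀ ℕ) (hy : y.support ⊆ x.support) :
      ∀ a ∈ Finsupp.toMultiset y, a ∈ T := fun a ha =>
    hx (hy ((Finsupp.mem_toMultiset y a).1 ha))
  refine ⟨Finsupp.toMultiset (x.mapRange Int.toNat rfl),
    Finsupp.toMultiset (x.mapRange (fun m => (-m).toNat) rfl),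
    mem_of_mem _ Finsupp.support_mapRange, mem_of_mem _ Finsupp.support_mapRange, ?_⟩
  ext a
  rw [Finsupp.sub_apply, exponentVector_apply, exponentVector_apply, Finsupp.count_toMultiset,
    Finsupp.count_toMultiset, Finsupp.mapRange_apply, Finsupp.mapRange_apply,
    Int.toNat_sub_toNat_neg]

variable {G : Type*} [AddCommGroup G]

lemma linearCombination_exponentVector (S : Multiset G) :
    Finsupp.linearCombination ℤ id (exponentVector S) = S.sum := by
  induction S using Multiset.induction_on with
  | empty => simp
  | cons a S ih => rw [exponentVector_cons, _root_.map_add, ih]; simp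

lemma exponentVector_mem_relations_iff {T : Set G} {S : Multiset G} :
    exponentVector S ∈ relations T ↔ IsZeroSumSeq T S := by
  classical
  rw [relations, Submodule.mem_inf, Finsupp.mem_supported', LinearMap.mem_ker,
    linearCombination_exponentVector]
  refine and_congr_left fun _ => forall_congr' fun g => ?_
  rw [exponentVector_apply, Nat.cast_eq_zero, Multiset.count_eq_zero, not_imp_not]

lemma exists_isZeroSumSeq_sub_eq [Finite G] {T : Set G} {x : G →₀ ℤ} (hx : x ∈ relations T) :
    ∃ C D : Multiset G, IsZeroSumSeq T C ∧ IsZeroSumSeq T D ∧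
      exponentVector C - exponentVector D = x := by
  obtain ⟨A, B, hA, hB, rfl⟩ := exists_exponentVector_sub_eq hx.1
  have hsum : A.sum = B.sum := by
    rw [← sub_eq_zero, ← linearCombination_exponentVector, ← linearCombination_exponentVector,
      ← _root_.map_sub]
    exact hx.2
  obtain ⟨k, hk⟩ := Nat.exists_eq_add_one_of_ne_zero
    (AddMonoid.exponent_ne_zero_of_finite (G := G))
  -- As `A` and `B` have the same sum, adding `k • B`, whose sum is `-B.sum`, makes both zero-sum.
  have hBk : B.sum + (k • B).sum = 0 := by
    rw [Multiset.sum_nsmul, ← succ_nsmul', ← hk, AddMonoid.exponent_nsmul_eq_zero]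
  have mem_of_mem {S : Multiset G} (hS : ∀ g ∈ S, g ∈ T) : ∀ g ∈ S + k • B, g ∈ T := fun g hg =>
    (Multiset.mem_add.1 hg).elim (hS g) fun h => hB g (Multiset.mem_of_mem_nsmul h)
  refine ⟨A + k • B, B + k • B, ⟨mem_of_mem hA, ?_⟩, ⟨mem_of_mem hB, ?_⟩, ?_⟩
  · rw [Multiset.sum_add, hsum, hBk]
  · rw [Multiset.sum_add, hBk]
  · rw [_root_.map_add, _root_.map_add, add_sub_add_right_eq_sub]

theorem exists_add_eq_of_exponentVector_mem_iSup [Finite G] {ι : Sort*} {T : ι → Set G}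
    {N : AddSubmonoid (Multiset G)} (hT : ∀ i B, IsZeroSumSeq (T i) B → B ∈ N) {U : Multiset G}
    (hU : exponentVector U ∈ ⨆ i, relations (T i)) : ∃ C ∈ N, ∃ D ∈ N, U + D = C := by
  suffices ∃ C ∈ N, ∃ D ∈ N, exponentVector C - exponentVector D = exponentVector U by
    obtain ⟨C, hC, D, hD, h⟩ := this
    refine ⟨C, hC, D, hD, exponentVector_injective ?_⟩
    rw [_root_.map_add, ← h, sub_add_cancel]
  generalize exponentVector U = x at hU ⊢
  induction hU using Submodule.iSup_induction' with
  | mem i x hx =>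
    obtain ⟨C, D, hC, hD, h⟩ := exists_isZeroSumSeq_sub_eq hx
    exact ⟨C, hT i C hC, D, hT i D hD, h⟩
  | zero => exact ⟨0, zero_mem N, 0, zero_mem N, sub_self _⟩
  | add x y _ _ ihx ihy =>
    obtain ⟨C, hC, D, hD, rfl⟩ := ihx
    obtain ⟨C', hC', D', hD', rfl⟩ := ihy
    exact ⟨C + C', add_mem hC hC', D + D', add_mem hD hD', by
      rw [_root_.map_add, _root_.map_add, add_sub_add_comm]⟩

end ExponentVector

/-- For a finite abelian group `G` and a non-half-factorial `G₀ ⊆ G`,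
`min Δ(G₀) ≤ max { exp(G) − 2, r(G) − 1 }`. -/
theorem stmt_1 {G : Type*} [AddCommGroup G] [Fintype G] (G₀ : Set G)
    (hG₀ : (DeltaSet G₀).Nonempty) :
    sInf (DeltaSet G₀) ≤ max (AddMonoid.exponent G - 2) (rankG G - 1) := by
  classical
  by_contra! hlt
  obtain ⟨hexp_lt, hrank_lt⟩ := max_lt_iff.1 hlt
  have hexp : AddMonoid.exponent G ≤ sInf (DeltaSet G₀) + 1 := by lia
  obtain ⟨U, hU, hU1, hU_min⟩ := exists_isAtomSeq_crossNumber_ne_one_forall_ssubset hG₀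
  have hcard : rankG G + 2 ≤ U.toFinset.card := by
    have := mt (hU.crossNumber_eq_one_of_card_toFinset_le (isLCNSet_of_exponent_le hexp)) hU1
    lia
  have hmem : exponentVector U ∈ relations (U.toFinset : Set G) :=
    exponentVector_mem_relations_iff.2 ⟨fun g hg => Multiset.mem_toFinset.2 hg, hU.1.2⟩
  obtain ⟨_, hC, D, hD, rfl⟩ := exists_add_eq_of_exponentVector_mem_iSup
    (fun i => hU_min _ (Set.sdiff_singleton_ssubset.2 i.2))
    (relations_le_iSup_relations_diff_singleton hcard hmem)
  exact hU1 (hU.crossNumber_eq_one_of_mem (mem_crossOneMonoid_of_add_mem hexp hD hC))
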